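/- arXiv:1510.02145 — 3 statements merged into one kernel-verified Lean document; each statement's English description precedes it below -/
import Mathlib

section
/- Let F : ℝⁿ × ℝᵐ → ℝ be twice continuously differentiable with nonempty saddle set Saddle(F). If F is globally jointly strongly quasiconvex-quasiconcave and the mixed second-derivative map ∇ₓ_z F is constant on ℝⁿ × ℝᵐ, then Saddle(F) is globally asymptotically stable under the saddle-point dynamics ẋ = -∇ₓF(x,z), ż = ∇_zF(x,z), and every trajectory converges to a single point of Saddle(F). -/
open Metric Filter Topology Set

noncomputable section

/-- Euclidean space `ℝⁿ`. -/
abbrev En (n : ℕ) : Type := EuclideanSpace ℝ (Fin n)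

variable {n m : ℕ}

/-- Partial gradient of `F` in the first (x) variable. -/
def gradX (F : En n × En m → ℝ) (p : En n × En m) : En n :=
  gradient (fun x => F (x, p.2)) p.1

/-- Partial gradient of `F` in the second (z) variable. -/
def gradZ (F : En n × En m → ℝ) (p : En n × En m) : En m :=
  gradient (fun z => F (p.1, z)) p.2

/-- The saddle-point vector field `X_sp = (-∇ₓF, ∇_zF)`. -/
def Xsp (F : En n × En m → ℝ) (p : En n × En m) : En n × En m :=
  (-gradX F p, gradZ F p)

/-- A trajectory of the saddle-point dynamics, defined on `[0,∞)`. -/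
def IsTrajectory (F : En n × En m → ℝ) (φ : ℝ → En n × En m) : Prop :=
  ∀ t : ℝ, 0 ≤ t → HasDerivAt φ (Xsp F (φ t)) t

/-- `p` is a (local min-max) saddle point of `F`. -/
def IsSaddlePoint (F : En n × En m → ℝ) (p : En n × En m) : Prop :=
  ∃ U : Set (En n), ∃ W : Set (En m),
    IsOpen U ∧ IsOpen W ∧ p.1 ∈ U ∧ p.2 ∈ W ∧
    ∀ x ∈ U, ∀ z ∈ W, F (p.1, z) ≤ F p ∧ F p ≤ F (x, p.2)

/-- The set of saddle points of `F`. -/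
def SaddleSet (F : En n × En m → ℝ) : Set (En n × En m) :=
  {p | IsSaddlePoint F p}

/-- A point `p` is stable for the saddle-point dynamics of `F`. -/
def StablePt (F : En n × En m → ℝ) (p : En n × En m) : Prop :=
  ∀ ε > 0, ∃ δ > 0, ∀ φ : ℝ → En n × En m, IsTrajectory F φ →
    dist (φ 0) p < δ → ∀ t : ℝ, 0 ≤ t → dist (φ t) p < ε

/-- `S` is an isolated path connected component of `T`. -/
def IsIsolatedPathComponent (S T : Set (En n × En m)) : Prop :=
  S ⊆ T ∧ (∀ a ∈ S, ∀ b ∈ S, JoinedIn S a b) ∧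
    ∃ U : Set (En n × En m), IsOpen U ∧ S ⊆ U ∧ U ∩ T = S

/-- `F` is locally convex-concave at `p`. -/
def LocallyConvexConcaveAt (F : En n × En m → ℝ) (p : En n × En m) : Prop :=
  ∃ U : Set (En n × En m), IsOpen U ∧ p ∈ U ∧
    ∀ q ∈ U, ConvexOn ℝ {x : En n | (x, q.2) ∈ U} (fun x => F (x, q.2)) ∧
      ConcaveOn ℝ {z : En m | (q.1, z) ∈ U} (fun z => F (q.1, z))

/-- `F` is locally strictly convex-concave at `p`. -/
def LocallyStrictlyConvexConcaveAt (F : En n × En m → ℝ) (p : En n × En m) : Prop :=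
  LocallyConvexConcaveAt F p ∧
    ((∃ r > 0, StrictConvexOn ℝ (ball p.1 r) (fun x => F (x, p.2))) ∨
      (∃ r > 0, StrictConcaveOn ℝ (ball p.2 r) (fun z => F (p.1, z))))

/-- A function `f` is strongly quasiconvex with parameter `s > 0` on a convex set `D`. -/
def StronglyQuasiconvexOn {X : Type*} [NormedAddCommGroup X] [NormedSpace ℝ X]
    (s : ℝ) (D : Set X) (f : X → ℝ) : Prop :=
  Convex ℝ D ∧ ∀ x ∈ D, ∀ y ∈ D, ∀ lam ∈ Icc (0 : ℝ) 1,
    s * lam * (1 - lam) * ‖x - y‖ ^ 2 ≤ max (f x) (f y) - f (lam • x + (1 - lam) • y)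

/-- The mixed second derivative map `(x,z) ↦ ∇ₓ_z F (x,z)`. -/
def mixedXZ (F : En n × En m → ℝ) (p : En n × En m) : En m →L[ℝ] En n :=
  fderiv ℝ (fun z => gradX F (p.1, z)) p.2

open InnerProductSpace in
lemma aux_gradX {n m : ℕ} (F : En n × En m → ℝ) (hF : ContDiff ℝ 2 F) (p : En n × En m) :
    HasFDerivAt (fun x => F (x, p.2)) (toDual ℝ (En n) (gradX F p)) p.1 := by
  have hd : Differentiable ℝ F := hF.differentiable (by norm_num)
  have h : DifferentiableAt ℝ (fun x => F (x, p.2)) p.1 := by fun_prop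
  exact h.hasGradientAt.hasFDerivAt

open InnerProductSpace in
lemma aux_gradZ {n m : ℕ} (F : En n × En m → ℝ) (hF : ContDiff ℝ 2 F) (p : En n × En m) :
    HasFDerivAt (fun z => F (p.1, z)) (toDual ℝ (En m) (gradZ F p)) p.2 := by
  have hd : Differentiable ℝ F := hF.differentiable (by norm_num)
  have h : DifferentiableAt ℝ (fun z => F (p.1, z)) p.2 := by fun_prop
  exact h.hasGradientAt.hasFDerivAt

open InnerProductSpace in
lemma aux_diff {n m : ℕ} (F : En n × En m → ℝ) (hF : ContDiff ℝ 2 F) (x : En n) :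
    Differentiable ℝ (fun z => gradX F (x, z)) := by
  have hd : Differentiable ℝ F := hF.differentiable (by norm_num)
  have h1 : Differentiable ℝ (fderiv ℝ F) :=
    (hF.fderiv_right (m := 1) (by norm_num)).differentiable (by norm_num)
  have e : (fun z => gradX F (x, z)) = fun z => (toDual ℝ (En n)).symm
      ((fderiv ℝ F (x, z)).comp (ContinuousLinearMap.inl ℝ (En n) (En m))) := by
    funext z
    have h2 := aux_gradX F hF (x, z)
    have h3 : HasFDerivAt (fun x => F (x, z))
      ((fderiv ℝ F (x, z)).comp (ContinuousLinearMap.inl ℝ (En n) (En m))) x :=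
      (hd (x, z)).hasFDerivAt.comp x (hasFDerivAt_prodMk_left x z)
    rw [← h2.unique h3]; simp
  rw [e]
  intro z
  have h4 : DifferentiableAt ℝ (fun z => (fderiv ℝ F (x, z)).comp
      (ContinuousLinearMap.inl ℝ (En n) (En m))) z := by fun_prop
  exact ((toDual ℝ (En n)).symm.toContinuousLinearEquiv.differentiableAt).comp z h4

/-- decomposition of `F` -/
lemma aux_decomp {n m : ℕ} (F : En n × En m → ℝ) (hF : ContDiff ℝ 2 F)
    (hconst : ∀ p q : En n × En m, mixedXZ F p = mixedXZ F q) (p : En n × En m) (x : En n)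
    (z : En m) : F (x, z) = F (x, p.2) + F (p.1, z) - F p
      + inner ℝ (x - p.1) (mixedXZ F p (z - p.2)) := by
  have hg : ∀ x, gradX F (x, z) = gradX F (x, p.2) + mixedXZ F p (z - p.2) := by
    intro x
    have hc := is_const_of_fderiv_eq_zero (𝕜 := ℝ)
      (f := fun z => gradX F (x, z) - mixedXZ F p z)
      ((aux_diff F hF x).sub (mixedXZ F p).differentiable) (by
        intro z
        rw [fderiv_fun_sub (aux_diff F hF x z) (mixedXZ F p).differentiableAt,
          ContinuousLinearMap.fderiv, sub_eq_zero]
        exact hconst (x, z) p) z p.2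
    rw [map_sub]
    rw [sub_eq_sub_iff_add_eq_add] at hc
    rw [← add_sub_assoc, ← hc, add_sub_cancel_right]
  have hD : ∀ x, HasFDerivAt (fun x => F (x, z) - F (x, p.2)
      - inner ℝ (mixedXZ F p (z - p.2)) x) (0 : En n →L[ℝ] ℝ) x := by
    intro x
    have h := ((aux_gradX F hF (x, z)).sub (aux_gradX F hF (x, p.2))).sub
      (innerSL ℝ (mixedXZ F p (z - p.2))).hasFDerivAt
    refine h.congr_fderiv ?_
    ext v
    simp [hg x, inner_add_left]
  have hc := is_const_of_fderiv_eq_zero (𝕜 := ℝ) (fun x => (hD x).differentiableAt)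
    (fun x => (hD x).fderiv) x p.1
  rw [real_inner_comm, inner_sub_right]
  have : F p = F (p.1, p.2) := rfl
  linarith

/-- gradient inequality -/
lemma aux_sq {k : ℕ} {s : ℝ} (hs : 0 < s) {f : En k → ℝ} (hf : StronglyQuasiconvexOn s univ f)
    {xs x : En k} (hmin : ∀ᶠ y in 𝓝 xs, f xs ≤ f y) {f' : En k →L[ℝ] ℝ}
    (hd : HasFDerivAt f f' x) : s * ‖x - xs‖ ^ 2 ≤ f' (x - xs) := by
  have hglob : f xs ≤ f x := by
    by_contra! hlt
    have hne : x ≠ xs := by rintro rfl; exact lt_irrefl _ hlt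
    have hcont : Tendsto (fun l : ℝ => l • x + (1 - l) • xs) (𝓝[>] 0) (𝓝 xs) := by
      have : Continuous (fun l : ℝ => l • x + (1 - l) • xs) := by fun_prop
      have := this.tendsto 0
      simp only [zero_smul, sub_zero, one_smul, zero_add] at this
      exact this.mono_left nhdsWithin_le_nhds
    obtain ⟨l, hl, hl2⟩ := ((hcont.eventually hmin).and
      (Ioo_mem_nhdsGT (show (0 : ℝ) < 1 by norm_num))).exists
    have h := hf.2 x trivial xs trivial l ⟨hl2.1.le, hl2.2.le⟩
    rw [max_eq_right hlt.le] at h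
    have h1 : 0 < ‖x - xs‖ := norm_pos_iff.2 (sub_ne_zero.2 hne)
    have h2 : 0 < 1 - l := by linarith [hl2.2]
    have h3 := hl2.1
    have : 0 < s * l * (1 - l) * ‖x - xs‖ ^ 2 := by positivity
    linarith
  -- slope
  have hline : HasDerivAt (fun l : ℝ => f (x + l • (xs - x))) (f' (xs - x)) 0 := by
    have h1 : HasDerivAt (fun l : ℝ => x + l • (xs - x)) (xs - x) 0 := by
      simpa using ((hasDerivAt_id (0 : ℝ)).smul_const (xs - x)).const_add x
    have h2 : HasFDerivAt f f' (x + (0 : ℝ) • (xs - x)) := by simpa using hd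
    exact h2.comp_hasDerivAt 0 h1
  have hquad : HasDerivAt (fun l : ℝ => f (x + l • (xs - x))
      + s * l * (1 - l) * ‖x - xs‖ ^ 2) (f' (xs - x) + s * ‖x - xs‖ ^ 2) 0 := by
    have h3 : HasDerivAt (fun l : ℝ => s * l * (1 - l) * ‖x - xs‖ ^ 2) (s * ‖x - xs‖ ^ 2) 0 := by
      have := ((((hasDerivAt_id (0 : ℝ)).const_mul s).mul
        ((hasDerivAt_id (0 : ℝ)).const_sub 1))).mul_const (‖x - xs‖ ^ 2)
      refine this.congr_deriv ?_
      simp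
    exact hline.add h3
  have hle : f' (xs - x) + s * ‖x - xs‖ ^ 2 ≤ 0 := by
    have ht := hquad.tendsto_slope_zero_right
    refine le_of_tendsto ht ?_
    filter_upwards [Ioo_mem_nhdsGT (show (0 : ℝ) < 1 by norm_num)] with l hl
    have h := hf.2 xs trivial x trivial l ⟨hl.1.le, hl.2.le⟩
    rw [max_eq_right hglob, norm_sub_rev] at h
    have e : l • xs + (1 - l) • x = x + l • (xs - x) := by module
    rw [e] at h
    have hinv : 0 < l⁻¹ := inv_pos.2 hl.1
    simp only [zero_add, zero_smul, add_zero, smul_eq_mul, mul_zero, zero_mul]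
    nlinarith
  have : f' (xs - x) = - f' (x - xs) := by rw [← map_neg, neg_sub]
  linarith

lemma aux_decay {n m : ℕ} (F : En n × En m → ℝ) (hF : ContDiff ℝ 2 F) {s : ℝ} (hs : 0 < s)
    (hqcqc : ∀ q : En n × En m,
      StronglyQuasiconvexOn s univ (fun x => F (x, q.2)) ∧
        StronglyQuasiconvexOn s univ (fun z => -F (q.1, z)))
    (hconst : ∀ p q : En n × En m, mixedXZ F p = mixedXZ F q)
    {p : En n × En m} (hp : p ∈ SaddleSet F) {φ : ℝ → En n × En m} (hφ : IsTrajectory F φ)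
    {t : ℝ} (ht : 0 ≤ t) :
    ‖(φ t).1 - p.1‖ ^ 2 + ‖(φ t).2 - p.2‖ ^ 2 ≤
      (‖(φ 0).1 - p.1‖ ^ 2 + ‖(φ 0).2 - p.2‖ ^ 2) * Real.exp (-(2 * s * t)) := by
  obtain ⟨U, W, hU, hW, hpU, hpW, hUW⟩ := hp
  have hV : ∀ q : En n × En m, s * (‖q.1 - p.1‖ ^ 2 + ‖q.2 - p.2‖ ^ 2) ≤
      inner ℝ (gradX F q) (q.1 - p.1) - inner ℝ (gradZ F q) (q.2 - p.2) := by
    intro q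
    have hx := aux_sq hs (hqcqc p).1 (xs := p.1) (x := q.1)
      (by filter_upwards [hU.mem_nhds hpU] with y hy using (hUW y hy p.2 hpW).2)
      (aux_gradX F hF (q.1, p.2))
    have hz := aux_sq hs (hqcqc p).2 (xs := p.2) (x := q.2)
      (by filter_upwards [hW.mem_nhds hpW] with y hy using neg_le_neg (hUW p.1 hpU y hy).1)
      (aux_gradZ F hF (p.1, q.2)).neg
    have ex : inner ℝ (gradX F q) (q.1 - p.1) = inner ℝ (gradX F (q.1, p.2)) (q.1 - p.1)
        + inner ℝ (mixedXZ F p (q.2 - p.2)) (q.1 - p.1) := by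
      have h1 := (((aux_gradX F hF (q.1, p.2)).add_const (F (p.1, q.2) - F p))).add
        ((innerSL ℝ (mixedXZ F p (q.2 - p.2))).hasFDerivAt.comp q.1
          ((hasFDerivAt_id (𝕜 := ℝ) q.1).sub_const p.1))
      have h2 := h1.congr_of_eventuallyEq (f₁ := fun x => F (x, q.2)) (Eventually.of_forall (by
        intro x
        have := aux_decomp F hF hconst p x q.2
        simp only [Pi.add_apply, Function.comp, innerSL_apply_apply, id]
        rw [this, real_inner_comm]; ring))
      have h3 := congrArg (fun L => L (q.1 - p.1)) ((aux_gradX F hF q).unique h2)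
      simpa [-map_sub] using h3
    have ez : inner ℝ (gradZ F q) (q.2 - p.2) = inner ℝ (gradZ F (p.1, q.2)) (q.2 - p.2)
        + inner ℝ (mixedXZ F p (q.2 - p.2)) (q.1 - p.1) := by
      have h1 := (((aux_gradZ F hF (p.1, q.2)).add_const (F (q.1, p.2) - F p))).add
        (((innerSL ℝ (q.1 - p.1)).comp (mixedXZ F p)).hasFDerivAt.comp q.2
          ((hasFDerivAt_id (𝕜 := ℝ) q.2).sub_const p.2))
      have h2 := h1.congr_of_eventuallyEq (f₁ := fun z => F (q.1, z)) (Eventually.of_forall (by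
        intro z
        have := aux_decomp F hF hconst p q.1 z
        simp only [Pi.add_apply, Function.comp, innerSL_apply_apply, id,
          ContinuousLinearMap.comp_apply]
        rw [this]; ring))
      have h3 := congrArg (fun L => L (q.2 - p.2)) ((aux_gradZ F hF q).unique h2)
      rw [real_inner_comm (q.1 - p.1)]
      simpa [-map_sub] using h3
    simp only [InnerProductSpace.toDual_apply_apply, neg_apply] at hx hz
    rw [ex, ez]
    linarith
  set E : ℝ → ℝ := fun t => ‖(φ t).1 - p.1‖ ^ 2 + ‖(φ t).2 - p.2‖ ^ 2 with hE
  have hEd : ∀ t, 0 ≤ t → HasDerivAt E (-2 * (inner ℝ (gradX F (φ t)) ((φ t).1 - p.1)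
      - inner ℝ (gradZ F (φ t)) ((φ t).2 - p.2))) t := by
    intro t ht
    have h := hφ t ht
    have h1 : HasDerivAt (fun t => (φ t).1) (-gradX F (φ t)) t := h.fst
    have h2 : HasDerivAt (fun t => (φ t).2) (gradZ F (φ t)) t := h.snd
    have h3 := (h1.sub_const p.1).norm_sq.add (h2.sub_const p.2).norm_sq
    refine h3.congr_deriv ?_
    rw [inner_neg_right, real_inner_comm, real_inner_comm (gradZ F (φ t))]
    ring
  have hGd : ∀ t, 0 ≤ t → HasDerivAt (fun t => E t * Real.exp (2 * s * t))
      (-2 * (inner ℝ (gradX F (φ t)) ((φ t).1 - p.1)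
      - inner ℝ (gradZ F (φ t)) ((φ t).2 - p.2)) * Real.exp (2 * s * t)
      + E t * (Real.exp (2 * s * t) * (2 * s))) t := by
    intro t ht
    have h1 : HasDerivAt (fun t => 2 * s * t) (2 * s) t := by
      simpa using (hasDerivAt_id t).const_mul (2 * s)
    exact (hEd t ht).mul h1.exp
  have hanti : AntitoneOn (fun t => E t * Real.exp (2 * s * t)) (Ici 0) := by
    apply antitoneOn_of_deriv_nonpos (convex_Ici 0)
    · exact fun t ht => (hGd t ht).continuousAt.continuousWithinAt
    · intro t ht
      rw [interior_Ici] at ht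
      exact (hGd t (le_of_lt ht)).differentiableAt.differentiableWithinAt
    · intro t ht
      rw [interior_Ici] at ht
      rw [(hGd t (le_of_lt ht)).deriv]
      have h1 := hV (φ t)
      have h2 := Real.exp_pos (2 * s * t)
      have h3 : s * E t ≤ inner ℝ (gradX F (φ t)) ((φ t).1 - p.1)
        - inner ℝ (gradZ F (φ t)) ((φ t).2 - p.2) := h1
      nlinarith [mul_le_mul_of_nonneg_right h3 h2.le]
  have h := hanti (mem_Ici.2 le_rfl) (mem_Ici.2 ht) ht
  simp only [mul_zero, Real.exp_zero, mul_one] at h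
  rw [Real.exp_neg, ← div_eq_mul_inv, le_div_iff₀ (Real.exp_pos _)]
  exact h

lemma aux_dist {n m : ℕ} (a p : En n × En m) :
    dist a p ^ 2 ≤ ‖a.1 - p.1‖ ^ 2 + ‖a.2 - p.2‖ ^ 2 := by
  rw [Prod.dist_eq, dist_eq_norm, dist_eq_norm]
  rcases max_cases ‖a.1 - p.1‖ ‖a.2 - p.2‖ with h | h <;> rw [h.1] <;> nlinarith [sq_nonneg ‖a.1 - p.1‖, sq_nonneg ‖a.2 - p.2‖]

/-- global asymptotic stability via strong
quasiconvexity-quasiconcavity. If `F` is `C²`, globally jointly strongly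
quasiconvex-quasiconcave, with constant mixed second derivative `∇ₓ_z F` and nonempty saddle
set, then the saddle set is globally asymptotically stable and every trajectory converges to a
single saddle point. -/
theorem stmt_5 {n m : ℕ} (F : En n × En m → ℝ) (hF : ContDiff ℝ 2 F)
    (hne : (SaddleSet F).Nonempty)
    (hqcqc : ∃ s > (0 : ℝ), ∀ q : En n × En m,
      StronglyQuasiconvexOn s univ (fun x => F (x, q.2)) ∧
        StronglyQuasiconvexOn s univ (fun z => -F (q.1, z)))
    (hconst : ∀ p q : En n × En m, mixedXZ F p = mixedXZ F q) :
    (∀ p ∈ SaddleSet F, StablePt F p) ∧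
    (∀ φ : ℝ → En n × En m, IsTrajectory F φ →
      ∃ q ∈ SaddleSet F, Tendsto φ atTop (𝓝 q)) := by
  obtain ⟨s, hs, hq⟩ := hqcqc
  have key := fun p (hp : p ∈ SaddleSet F) φ (hφ : IsTrajectory F φ) t (ht : (0 : ℝ) ≤ t) =>
    (aux_dist (φ t) p).trans (aux_decay F hF hs hq hconst hp hφ ht)
  constructor
  · intro p hp ε hε
    refine ⟨ε / 2, by positivity, fun φ hφ h0 t ht => ?_⟩
    have h := key p hp φ hφ t ht
    have h1 : ‖(φ 0).1 - p.1‖ < ε / 2 := by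
      rw [← dist_eq_norm]; exact lt_of_le_of_lt (le_max_left _ _) h0
    have h2 : ‖(φ 0).2 - p.2‖ < ε / 2 := by
      rw [← dist_eq_norm]; exact lt_of_le_of_lt (le_max_right _ _) h0
    have h3 : Real.exp (-(2 * s * t)) ≤ 1 := by
      rw [Real.exp_le_one_iff]
      have : 0 ≤ 2 * s * t := by positivity
      linarith
    have h4 := mul_le_of_le_one_right (show 0 ≤ ‖(φ 0).1 - p.1‖ ^ 2 + ‖(φ 0).2 - p.2‖ ^ 2 by
      positivity) h3
    have h5 : ‖(φ 0).1 - p.1‖ ^ 2 < (ε / 2) ^ 2 := by gcongr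
    have h6 : ‖(φ 0).2 - p.2‖ ^ 2 < (ε / 2) ^ 2 := by gcongr
    refine lt_of_pow_lt_pow_left₀ 2 hε.le ?_
    nlinarith
  · intro φ hφ
    obtain ⟨p, hp⟩ := hne
    refine ⟨p, hp, ?_⟩
    rw [tendsto_iff_dist_tendsto_zero]
    have hexp : Tendsto (fun t : ℝ => (‖(φ 0).1 - p.1‖ ^ 2 + ‖(φ 0).2 - p.2‖ ^ 2)
        * Real.exp (-(2 * s * t))) atTop (𝓝 0) := by
      have := (Real.tendsto_exp_neg_atTop_nhds_zero.comp
        (tendsto_id.const_mul_atTop (show 0 < 2 * s by positivity))).const_mul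
        (‖(φ 0).1 - p.1‖ ^ 2 + ‖(φ 0).2 - p.2‖ ^ 2)
      simpa using this
    have hsq : Tendsto (fun t => dist (φ t) p ^ 2) atTop (𝓝 0) :=
      squeeze_zero' (Eventually.of_forall fun t => sq_nonneg _)
        ((eventually_ge_atTop 0).mono fun t ht => key p hp φ hφ t ht) hexp
    have := hsq.sqrt
    simpa [Real.sqrt_sq dist_nonneg] using this
end
end

section
/- Let A ∈ ℝ^{n×n} be symmetric negative semidefinite and B ∈ ℝ^{n×m}, and suppose range(B) ∩ null(A) = {0}. Then the block matrix M = [[A, B], [−Bᵀ, 0]] ∈ ℝ^{(n+m)×(n+m)} has no purely imaginary nonzero eigenvalues; that is, whenever iλ with λ ∈ ℝ, λ ≠ 0, is an eigenvalue of M (viewed as a complex matrix), a contradiction follows. (In the paper this is applied with A = −∇ₓₓF(x*,z*) and B = −∇_zₓF(x*,z*) at a saddle point (x*,z*) of a C² function F that is linear in its second argument, giving: the Jacobian of the saddle-point dynamics at (x*,z*) has no eigenvalues on the imaginary axis except 0, provided range(∇_zₓF(x*,z*)) ∩ null(∇ₓₓF(x*,z*)) = {0}.) -/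
open Matrix

theorem aux_real {n m : ℕ} (A : Matrix (Fin n) (Fin n) ℝ) (B : Matrix (Fin n) (Fin m) ℝ)
    (hANSD : (-A).PosSemidef)
    (hrange : LinearMap.range B.mulVecLin ⊓ LinearMap.ker A.mulVecLin = ⊥)
    (lam : ℝ) (hl : lam ≠ 0) (p q : Fin n → ℝ) (r s : Fin m → ℝ)
    (h1 : A *ᵥ p + B *ᵥ r = -(lam • q)) (h2 : A *ᵥ q + B *ᵥ s = lam • p)
    (h3 : -(Bᵀ *ᵥ p) = -(lam • s)) (h4 : -(Bᵀ *ᵥ q) = lam • r) :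
    p = 0 ∧ q = 0 ∧ r = 0 ∧ s = 0 := by
  have e1 := congrArg (fun v => p ⬝ᵥ v) h1
  have e2 := congrArg (fun v => q ⬝ᵥ v) h2
  have e3 := congrArg (fun v => r ⬝ᵥ v) h3
  have e4 := congrArg (fun v => s ⬝ᵥ v) h4
  have t : ∀ (u : Fin n → ℝ) (w : Fin m → ℝ), w ⬝ᵥ (Bᵀ *ᵥ u) = u ⬝ᵥ (B *ᵥ w) := by
    intro u w
    rw [mulVec_transpose, dotProduct_comm, dotProduct_mulVec]
  simp only [dotProduct_add, dotProduct_neg, dotProduct_smul, smul_eq_mul, t] at e1 e2 e3 e4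
  have c1 := dotProduct_comm p q
  have c2 := dotProduct_comm r s
  have n1 := hANSD.dotProduct_mulVec_nonneg p
  have n2 := hANSD.dotProduct_mulVec_nonneg q
  have z1 := hANSD.dotProduct_mulVec_zero_iff p
  have z2 := hANSD.dotProduct_mulVec_zero_iff q
  simp only [star_trivial, neg_mulVec, dotProduct_neg, neg_eq_zero] at n1 n2 z1 z2
  rw [c1] at e1
  rw [c2] at e3
  have a1 := z1.1 (by linarith)
  have a2 := z2.1 (by linarith)
  have key : ∀ (c : ℝ) (u : Fin n → ℝ) (w : Fin m → ℝ), c ≠ 0 → A *ᵥ u = 0 →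
      B *ᵥ w = c • u → u = 0 := by
    intro c u w hc hu hw
    have : u ∈ LinearMap.range B.mulVecLin ⊓ LinearMap.ker A.mulVecLin := by
      refine ⟨⟨c⁻¹ • w, ?_⟩, ?_⟩
      · simp [mulVec_smul, hw, smul_smul, hc]
      · simpa using hu
    rw [hrange] at this
    simpa using this
  have hq : q = 0 := key (-lam) q r (neg_ne_zero.2 hl) a2 (by simpa [a1] using h1)
  have hp : p = 0 := key lam p s hl a1 (by simpa [a2] using h2)
  subst hq hp
  refine ⟨rfl, rfl, ?_, ?_⟩
  · simpa [hl, eq_comm] using h4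
  · simpa [hl, eq_comm] using h3

/-- If `A ∈ ℝ^{n×n}` is symmetric negative semidefinite, `B ∈ ℝ^{n×m}`,
and `range B ∩ null A = {0}`, then the block matrix `M = [[A, B], [-Bᵀ, 0]]` has no purely
imaginary nonzero eigenvalues (over `ℂ`). -/
theorem stmt_8 {n m : ℕ} (A : Matrix (Fin n) (Fin n) ℝ) (B : Matrix (Fin n) (Fin m) ℝ)
    (hAsymm : A.IsSymm) (hANSD : (-A).PosSemidef)
    (hrange : LinearMap.range B.mulVecLin ⊓ LinearMap.ker A.mulVecLin = ⊥) :
    ∀ lam : ℝ, lam ≠ 0 →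
      (lam : ℂ) * Complex.I ∉
        spectrum ℂ ((Matrix.fromBlocks A B (-Bᵀ) (0 : Matrix (Fin m) (Fin m) ℝ)).map
          (Complex.ofReal)) := by
  intro lam hl hs
  rw [spectrum.mem_iff, Matrix.isUnit_iff_isUnit_det, isUnit_iff_ne_zero, not_not,
    ← Matrix.exists_mulVec_eq_zero_iff] at hs
  obtain ⟨v, hv, h⟩ := hs
  rw [sub_mulVec, sub_eq_zero, algebraMap_eq_diagonal] at h
  have hk : ∀ k, (lam : ℂ) * Complex.I * v k = ∑ j, ((Matrix.fromBlocks A B (-Bᵀ)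
      (0 : Matrix (Fin m) (Fin m) ℝ)) k j : ℂ) * v j := by
    intro k
    have := congrFun h k
    rw [mulVec_diagonal] at this
    simpa [mulVec, dotProduct] using this
  have H := aux_real A B hANSD hrange lam hl (fun i => (v (Sum.inl i)).re)
    (fun i => (v (Sum.inl i)).im) (fun i => (v (Sum.inr i)).re) (fun i => (v (Sum.inr i)).im)
    (by
      ext i
      have := congrArg Complex.re (hk (Sum.inl i))
      simpa [mulVec, dotProduct, eq_comm] using this)
    (by
      ext i
      have := congrArg Complex.im (hk (Sum.inl i))
      simpa [mulVec, dotProduct, eq_comm] using this)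
    (by
      ext i
      have := congrArg Complex.re (hk (Sum.inr i))
      simpa [mulVec, dotProduct, eq_comm] using this)
    (by
      ext i
      have := congrArg Complex.im (hk (Sum.inr i))
      simpa [mulVec, dotProduct, eq_comm] using this)
  obtain ⟨a, b, c, d⟩ := H
  apply hv
  ext k
  rcases k with i | i
  · exact Complex.ext (congrFun a i) (congrFun b i)
  · exact Complex.ext (congrFun c i) (congrFun d i)
end

section
/- Let F : ℝⁿ × ℝᵐ → ℝ be continuously differentiable and let S ⊂ Saddle(F) be a path connected subset of the set of saddle points. If F is locally convex-concave at every point of S, then F is constant on S. -/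
open Metric Filter Topology Set

noncomputable section

variable {n m : ℕ}

theorem saddle_x {n m : ℕ} {F : En n × En m → ℝ} {U : Set (En n × En m)}
    (hU : ∀ q ∈ U, ConvexOn ℝ {x : En n | (x, q.2) ∈ U} (fun x => F (x, q.2)) ∧
      ConcaveOn ℝ {z : En m | (q.1, z) ∈ U} (fun z => F (q.1, z)))
    {q : En n × En m} (hq : q ∈ U) (hs : IsSaddlePoint F q) {x : En n} (hx : (x, q.2) ∈ U) :
    F q ≤ F (x, q.2) := by
  obtain ⟨V, W, hV, hW, h1, h2, h⟩ := hs
  have hl : IsLocalMinOn (fun x => F (x, q.2)) {x : En n | (x, q.2) ∈ U} q.1 := by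
    apply mem_nhdsWithin_of_mem_nhds
    filter_upwards [hV.mem_nhds h1] with y hy
    exact (h y hy q.2 h2).2
  exact IsMinOn.of_isLocalMinOn_of_convexOn (show q.1 ∈ {x : En n | (x, q.2) ∈ U} from hq)
    hl (hU q hq).1 hx

theorem saddle_z {n m : ℕ} {F : En n × En m → ℝ} {U : Set (En n × En m)}
    (hU : ∀ q ∈ U, ConvexOn ℝ {x : En n | (x, q.2) ∈ U} (fun x => F (x, q.2)) ∧
      ConcaveOn ℝ {z : En m | (q.1, z) ∈ U} (fun z => F (q.1, z)))
    {q : En n × En m} (hq : q ∈ U) (hs : IsSaddlePoint F q) {z : En m} (hz : (q.1, z) ∈ U) :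
    F (q.1, z) ≤ F q := by
  obtain ⟨V, W, hV, hW, h1, h2, h⟩ := hs
  have hl : IsLocalMaxOn (fun z => F (q.1, z)) {z : En m | (q.1, z) ∈ U} q.2 := by
    apply mem_nhdsWithin_of_mem_nhds
    filter_upwards [hW.mem_nhds h2] with y hy
    exact (h q.1 h1 y hy).1
  exact IsMaxOn.of_isLocalMaxOn_of_concaveOn (show q.2 ∈ {z : En m | (q.1, z) ∈ U} from hq)
    hl (hU q hq).2 hz

/-- constant function value over saddle points. If `F` is `C¹`,
`S ⊆ Saddle(F)` is path connected, and `F` is locally convex-concave at every point of `S`,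
then `F` is constant on `S`. -/
theorem stmt_13 {n m : ℕ} (F : En n × En m → ℝ) (hF : ContDiff ℝ 1 F)
    (S : Set (En n × En m)) (hSsub : S ⊆ SaddleSet F)
    (hpath : ∀ a ∈ S, ∀ b ∈ S, JoinedIn S a b)
    (hcc : ∀ p ∈ S, LocallyConvexConcaveAt F p) :
    ∀ p ∈ S, ∀ q ∈ S, F p = F q := by
  intro p hp q hq
  obtain ⟨γ, hγ⟩ := hpath p hp q hq
  have hlc : IsLocallyConstant (fun t => F (γ t)) := by
    rw [IsLocallyConstant.iff_eventually_eq]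
    intro t
    obtain ⟨U, hUo, hpU, hU⟩ := hcc _ (hγ t)
    have e1 : ∀ᶠ s in 𝓝 t, γ s ∈ U :=
      γ.continuous.continuousAt.eventually_mem (hUo.mem_nhds hpU)
    have e2 : ∀ᶠ s in 𝓝 t, ((γ s).1, (γ t).2) ∈ U :=
      (show Continuous fun s => ((γ s).1, (γ t).2) by fun_prop).continuousAt.eventually_mem
        (hUo.mem_nhds hpU)
    have e3 : ∀ᶠ s in 𝓝 t, ((γ t).1, (γ s).2) ∈ U :=
      (show Continuous fun s => ((γ t).1, (γ s).2) by fun_prop).continuousAt.eventually_mem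
        (hUo.mem_nhds hpU)
    filter_upwards [e1, e2, e3] with s h1 h2 h3
    have st := hSsub (hγ t)
    have ss := hSsub (hγ s)
    exact le_antisymm ((saddle_x hU h1 ss h3).trans (saddle_z hU hpU st h3))
      ((saddle_x hU hpU st h2).trans (saddle_z hU h1 ss h2))
  simpa using hlc.apply_eq_of_preconnectedSpace 0 1
end
end
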